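/- Let c ∈ (0,∞). Then the contour line L_c = {(r,z) ∈ [0,∞)×ℝ : (r,z) ∈ D, V(r,z) = c} is nonempty, and there exist a compact interval [z₁,z₂] with [0,L] ⊆ [z₁,z₂) and a function r_c ∈ C([z₁,z₂]; [0,∞)) such that r_c is real-analytic and strictly positive on (z₁,z₂), r_c(z₁) = r_c(z₂) = 0 and L_c ∪ {(0,z₁)} = {(r_c(z), z) : z ∈ [z₁,z₂]}. Moreover: (ii) if c < V(0,0), then z₁ < 0 and (0,z₁) ∈ L_c; (iii) if c > V(0,0), then z₁ = 0 and the curve z ↦ (r_c(z), z) approaches (0,0) tangentially along the z-axis as z → 0+ (i.e. r_c(z)/z → 0 as z → 0+, so the level surface Γ_c has a cusp towards the origin and closure Γ_c = Γ_c ∪ {(0,0,0)}). -/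

import Mathlib

open MeasureTheory Filter Topology Set intervalIntegral

noncomputable section

/-- The potential of a thin rod `{(0,0,ζ) : 0 ≤ ζ ≤ L}` with mass density `ρ`,
in cylindrical coordinates `(r, z)`:
`V(r,z) = ∫_0^L ρ(ζ)/√((ζ-z)² + r²) dζ`. -/
def rodV (L : ℝ) (ρ : ℝ → ℝ) (r z : ℝ) : ℝ :=
  ∫ ζ in (0:ℝ)..L, ρ ζ / Real.sqrt ((ζ - z) ^ 2 + r ^ 2)

end

/-- The rod potential as a function on `ℝ³`. -/
noncomputable def rodV3 (L : ℝ) (ρ : ℝ → ℝ) (x : EuclideanSpace ℝ (Fin 3)) : ℝ :=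
  rodV L ρ (Real.sqrt ((x 0) ^ 2 + (x 1) ^ 2)) (x 2)

/-- The complement of the rod in `ℝ³`. -/
def rodCompl (L : ℝ) : Set (EuclideanSpace ℝ (Fin 3)) :=
  {x | ¬ (x 0 = 0 ∧ x 1 = 0 ∧ x 2 ∈ Icc 0 L)}

/-- The level surface `Γ_c ⊆ D ⊆ ℝ³` of the rod potential. -/
def rodLevelSurface (L : ℝ) (ρ : ℝ → ℝ) (c : ℝ) : Set (EuclideanSpace ℝ (Fin 3)) :=
  {x ∈ rodCompl L | rodV3 L ρ x = c}

/-- The contour line `L_c = {(r,z) ∈ [0,∞) × ℝ : (r,z) ∈ D, V(r,z) = c}` of the rod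
potential in the `(r,z)` half-plane. -/
def rodContour (L : ℝ) (ρ : ℝ → ℝ) (c : ℝ) : Set (ℝ × ℝ) :=
  {p | 0 ≤ p.1 ∧ (0 < p.1 ∨ p.2 < 0 ∨ L < p.2) ∧ rodV L ρ p.1 p.2 = c}



/-- In `C(K, ℝ)`, the pointwise inverse square root of an analytic family of positive functions is
analytic. -/
theorem exists_contDiffAt_inv_sqrt {E K : Type*} [NormedAddCommGroup E] [NormedSpace ℝ E]
    [CompleteSpace E] [TopologicalSpace K] [CompactSpace K] {q : E → C(K, ℝ)} {u : E}
    (hq : ContDiffAt ℝ ⊤ q u) (hpos : ∀ k, 0 < q u k) :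
    ∃ ψ : E → C(K, ℝ), ContDiffAt ℝ ⊤ ψ u ∧
      ∀ᶠ x in 𝓝 u, ∀ k, ψ x k = 1 / Real.sqrt (q x k) := by
  let t₀ : C(K, ℝ) := ⟨fun k => 1 / Real.sqrt (q u k), by
    have h : ∀ k, Real.sqrt (q u k) ≠ 0 := fun k => (Real.sqrt_pos.2 (hpos k)).ne'
    fun_prop (disch := exact h _)⟩
  have ht₀ : ∀ k, 0 < t₀ k := fun k => one_div_pos.2 (Real.sqrt_pos.2 (hpos k))
  have htq : ∀ k, t₀ k * t₀ k * q u k = 1 := fun k => by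
    have h1 := Real.mul_self_sqrt (hpos k).le
    have h2 := (Real.sqrt_pos.2 (hpos k)).ne'
    change 1 / Real.sqrt (q u k) * (1 / Real.sqrt (q u k)) * q u k = 1
    field_simp
    nlinarith
  let f : E × C(K, ℝ) → C(K, ℝ) := fun p => p.2 * p.2 * q p.1
  have hf : ContDiffAt ℝ ⊤ f (u, t₀) :=
    (contDiffAt_snd.mul contDiffAt_snd).mul (ContDiffAt.comp (u, t₀) (by exact hq) contDiffAt_fst)
  have hderiv : (fderiv ℝ f (u, t₀) ∘L .inr ℝ E C(K, ℝ)) =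
      (ContinuousLinearMap.mul ℝ C(K, ℝ)) ((2 : ℝ) • (t₀ * q u)) := by
    have h1 : HasFDerivAt (fun t : C(K, ℝ) => f (u, t))
        (fderiv ℝ f (u, t₀) ∘L .inr ℝ E C(K, ℝ)) t₀ := by
      have := (hf.differentiableAt (by simp)).hasFDerivAt
      exact HasFDerivAt.comp t₀ this (hasFDerivAt_prodMk_right u t₀)
    have h2 := ((hasFDerivAt_id (𝕜 := ℝ) t₀).mul (hasFDerivAt_id (𝕜 := ℝ) t₀)).mul_const (q u)
    refine h1.unique (h2.congr_fderiv ?_)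
    ext s k
    simp
    ring
  have hinv : (fderiv ℝ f (u, t₀) ∘L .inr ℝ E C(K, ℝ)).IsInvertible := by
    rw [hderiv]
    refine ContinuousLinearMap.IsInvertible.of_inverse
      (g := ContinuousLinearMap.mul ℝ C(K, ℝ) ((1 / 2 : ℝ) • t₀)) ?_ ?_ <;>
    · ext s k
      have := htq k
      simp
      linear_combination s k * this
  refine ⟨hf.implicitFunction (by simp) hinv, hf.contDiffAt_implicitFunction (by simp) hinv, ?_⟩
  have hcont : ContinuousAt (hf.implicitFunction (by simp) hinv) u :=
    (hf.contDiffAt_implicitFunction (by simp) hinv).continuousAt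
  have h0 : hf.implicitFunction (by simp) hinv u = t₀ :=
    hf.implicitFunction_apply_self (by simp) hinv
  have hopen : IsOpen {t : C(K, ℝ) | ∀ k, 0 < t k} := by
    have := ContinuousMap.isOpen_setOfPred_mapsTo (X := K) (Y := ℝ)
      isCompact_univ (isOpen_Ioi (a := 0))
    simpa [MapsTo] using this
  have hev := hcont.eventually (hopen.mem_nhds (by rw [h0]; exact ht₀))
  filter_upwards [hev, hf.eventually_apply_implicitFunction (by simp) hinv] with x hx hfx k
  have hk := congrArg (fun g : C(K, ℝ) => g k) hfx
  have hxk : 0 < hf.implicitFunction (by simp) hinv x k := hx k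
  simp only [f, ContinuousMap.mul_apply, htq] at hk
  set t := hf.implicitFunction (by simp) hinv x k
  have : q x k = (1 / t) ^ 2 := by field_simp; linarith
  rw [this, Real.sqrt_sq (by positivity)]
  simp

/-- Integration against the density `ρ` over `[0, L]` as a continuous functional. -/
theorem exists_clm_integral_mul {L : ℝ} (hL : 0 < L) {ρ : ℝ → ℝ} (hρc : ContinuousOn ρ (Icc 0 L)) :
    ∃ Λ : C(Icc (0 : ℝ) L, ℝ) →L[ℝ] ℝ,
      ∀ f, Λ f = ∫ ζ in (0 : ℝ)..L, ρ ζ * f (projIcc 0 L hL.le ζ) := by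
  have h_int : ∀ f : C(Icc (0 : ℝ) L, ℝ),
      IntervalIntegrable (fun ζ => ρ ζ * f (projIcc 0 L hL.le ζ)) volume 0 L := fun f => by
    apply ContinuousOn.intervalIntegrable
    rw [uIcc_of_le hL.le]
    exact hρc.mul (f.continuous.comp continuous_projIcc).continuousOn
  obtain ⟨M, hM⟩ := isCompact_Icc.exists_bound_of_continuousOn hρc
  have hM0 : 0 ≤ M := (norm_nonneg _).trans (hM 0 ⟨le_rfl, hL.le⟩)
  refine ⟨LinearMap.mkContinuous
    { toFun := fun f => ∫ ζ in (0 : ℝ)..L, ρ ζ * f (projIcc 0 L hL.le ζ)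
      map_add' := fun f g => ?_
      map_smul' := fun a f => ?_ } (M * L) fun f => ?_, fun f => rfl⟩
  · rw [← integral_add (h_int f) (h_int g)]
    simp [mul_add]
  · rw [RingHom.id_apply, smul_eq_mul, ← intervalIntegral.integral_const_mul]
    refine integral_congr fun ζ _ => ?_
    simp
    ring
  · refine (intervalIntegral.norm_integral_le_of_norm_le_const (C := M * ‖f‖)
      fun ζ hζ => ?_).trans (le_of_eq ?_)
    · rw [uIoc_of_le hL.le] at hζ
      rw [norm_mul]
      exact mul_le_mul (hM ζ ⟨hζ.1.le, hζ.2⟩) (f.norm_coe_le_norm _) (norm_nonneg _) hM0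
    · rw [sub_zero, abs_of_pos hL]
      ring

/-- The rod potential is analytic off the rod, and strictly decreasing in the radial direction to
first order. -/
theorem rodV_contDiffAt_fderiv {L : ℝ} (hL : 0 < L) {ρ : ℝ → ℝ} (hρc : ContinuousOn ρ (Icc 0 L))
    (hρpos : ∀ ζ ∈ Ioc 0 L, 0 < ρ ζ) {z r : ℝ} (h : ∀ ζ ∈ Icc 0 L, 0 < (ζ - z) ^ 2 + r ^ 2) :
    ContDiffAt ℝ ⊤ (fun p : ℝ × ℝ => rodV L ρ p.2 p.1) (z, r) ∧
      (0 < r → fderiv ℝ (fun p : ℝ × ℝ => rodV L ρ p.2 p.1) (z, r) (0, 1) < 0) := by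
  obtain ⟨Λ, hΛ⟩ := exists_clm_integral_mul hL hρc
  let I : C(Icc (0 : ℝ) L, ℝ) := ⟨fun ζ => ζ, by fun_prop⟩
  let q : ℝ × ℝ → C(Icc (0 : ℝ) L, ℝ) := fun p =>
    (I - p.1 • 1) * (I - p.1 • 1) + (p.2 * p.2) • 1
  have hqv : ∀ p ζ, q p ζ = ((ζ : ℝ) - p.1) ^ 2 + p.2 ^ 2 := fun p ζ => by
    simp [q, I]
    ring
  have hq : ContDiffAt ℝ ⊤ q (z, r) := by
    have : ContDiff ℝ ⊤ q := by
      have h1 : ContDiff ℝ ⊤ (fun p : ℝ × ℝ => I - p.1 • (1 : C(Icc (0 : ℝ) L, ℝ))) :=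
        contDiff_const.sub (contDiff_fst.smul contDiff_const)
      exact (h1.mul h1).add ((contDiff_snd.mul contDiff_snd).smul contDiff_const)
    exact this.contDiffAt
  obtain ⟨ψ, hψ, hev⟩ := exists_contDiffAt_inv_sqrt hq (fun k => by rw [hqv]; exact h k k.2)
  have heq : (fun p : ℝ × ℝ => rodV L ρ p.2 p.1) =ᶠ[𝓝 (z, r)] fun p => Λ (ψ p) := by
    filter_upwards [hev] with p hp
    rw [hΛ, rodV]
    refine integral_congr fun ζ hζ => ?_
    rw [uIcc_of_le hL.le] at hζ
    simp only [hp, hqv, projIcc_of_mem hL.le hζ]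
    ring
  refine ⟨(Λ.contDiff.contDiffAt.comp _ hψ).congr_of_eventuallyEq heq, fun hr => ?_⟩
  have hψd : HasFDerivAt ψ (fderiv ℝ ψ (z, r)) (z, r) := (hψ.differentiableAt (by simp)).hasFDerivAt
  rw [heq.fderiv_eq, (show HasFDerivAt (fun p => Λ (ψ p)) _ (z, r) from
    Λ.hasFDerivAt.comp _ hψd).fderiv]
  have hline : HasDerivAt (fun t => ψ (z, t)) (fderiv ℝ ψ (z, r) (0, 1)) r :=
    hψd.comp_hasDerivAt r ((hasDerivAt_const r z).prodMk (hasDerivAt_id r))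
  have hval : ∀ ζ : Icc (0 : ℝ) L, fderiv ℝ ψ (z, r) (0, 1) ζ < 0 := fun ζ => by
    have h1 : HasDerivAt (fun t => ψ (z, t) ζ) (fderiv ℝ ψ (z, r) (0, 1) ζ) r :=
      (ContinuousMap.evalCLM (α := Icc (0 : ℝ) L) (M := ℝ) ℝ ζ).hasFDerivAt.comp_hasDerivAt r hline
    have hQ := h ζ ζ.2
    have hpos := Real.sqrt_pos.2 hQ
    have h2 : HasDerivAt (fun t => (Real.sqrt (((ζ : ℝ) - z) ^ 2 + t ^ 2))⁻¹) _ r :=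
      ((((hasDerivAt_id r).pow 2).const_add (((ζ : ℝ) - z) ^ 2)).sqrt hQ.ne').inv hpos.ne'
    have h3 : (fun t => ψ (z, t) ζ) =ᶠ[𝓝 r] fun t => (Real.sqrt (((ζ : ℝ) - z) ^ 2 + t ^ 2))⁻¹ := by
      have : Tendsto (fun t => (z, t)) (𝓝 r) (𝓝 (z, r)) := (Continuous.prodMk_right z).tendsto r
      filter_upwards [this.eventually hev] with t ht
      rw [ht, hqv, one_div]
    rw [h1.unique (h2.congr_of_eventuallyEq h3)]
    simp only [id, Nat.cast_ofNat, mul_one, Nat.add_one_sub_one, pow_one]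
    rw [neg_div]
    simp only [Left.neg_neg_iff]
    positivity
  change Λ (fderiv ℝ ψ (z, r) (0, 1)) < 0
  have hneg : 0 < Λ (-fderiv ℝ ψ (z, r) (0, 1)) := by
    rw [hΛ]
    refine intervalIntegral_pos_of_pos_on ?_ (fun ζ hζ => ?_) hL
    · apply ContinuousOn.intervalIntegrable
      rw [uIcc_of_le hL.le]
      exact hρc.mul (ContinuousMap.continuous _ |>.comp continuous_projIcc).continuousOn
    · exact mul_pos (hρpos ζ ⟨hζ.1, hζ.2.le⟩) (neg_pos.2 (hval _))
  rw [map_neg] at hneg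
  linarith

/-- The standing hypotheses on the mass density of a rod with finite potential at the origin. -/
structure IsCriticalRod (L : ℝ) (ρ : ℝ → ℝ) : Prop where
  length_pos : 0 < L
  continuousOn : ContinuousOn ρ (Icc 0 L)
  pos : ∀ ζ ∈ Ioc 0 L, 0 < ρ ζ
  integrable_div : IntervalIntegrable (fun ζ => ρ ζ / ζ) volume 0 L

theorem rodDistSq_pos {L r z : ℝ} (h : 0 < r ∨ z < 0 ∨ L < z) {ζ : ℝ} (hζ : ζ ∈ Icc 0 L) :
    0 < (ζ - z) ^ 2 + r ^ 2 := by
  obtain ⟨h1, h2⟩ := hζ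
  rcases h with h | h | h
  · positivity
  · nlinarith [sq_nonneg r]
  · nlinarith [sq_nonneg r]

namespace IsCriticalRod

variable {L : ℝ} {ρ : ℝ → ℝ}

theorem intervalIntegrable (h : IsCriticalRod L ρ) {r z : ℝ} (hr : 0 < r ∨ z ≤ 0 ∨ L < z) :
    IntervalIntegrable (fun ζ => ρ ζ / Real.sqrt ((ζ - z) ^ 2 + r ^ 2)) volume 0 L := by
  by_cases h0 : 0 < r ∨ z < 0 ∨ L < z
  · apply ContinuousOn.intervalIntegrable
    rw [uIcc_of_le h.length_pos.le]
    exact h.continuousOn.div (by fun_prop) fun ζ hζ => (Real.sqrt_pos.2 (rodDistSq_pos h0 hζ)).ne'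
  · have hz : z = 0 := by
      rcases hr with hr | hr | hr
      · exact absurd (Or.inl hr) h0
      · by_contra hne
        exact h0 (Or.inr (Or.inl (lt_of_le_of_ne hr hne)))
      · exact absurd (Or.inr (Or.inr hr)) h0
    by_cases hr0 : r = 0
    · refine h.integrable_div.congr fun ζ hζ => ?_
      rw [uIoc_of_le h.length_pos.le] at hζ
      simp [hz, hr0, Real.sqrt_sq hζ.1.le]
    · apply ContinuousOn.intervalIntegrable
      rw [uIcc_of_le h.length_pos.le]
      refine h.continuousOn.div (by fun_prop) fun ζ hζ => (Real.sqrt_pos.2 ?_).ne'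
      positivity

/-- The potential increases when the point moves closer to every point of the rod. -/
theorem rodV_lt (h : IsCriticalRod L ρ) {r z r' z' : ℝ} (hr : 0 < r ∨ z ≤ 0 ∨ L < z)
    (hr' : 0 < r' ∨ z' ≤ 0 ∨ L < z')
    (hlt : ∀ ζ ∈ Ioo 0 L, (ζ - z') ^ 2 + r' ^ 2 < (ζ - z) ^ 2 + r ^ 2) :
    rodV L ρ r z < rodV L ρ r' z' := by
  rw [← sub_pos, rodV, rodV, ← integral_sub (h.intervalIntegrable hr') (h.intervalIntegrable hr)]
  refine intervalIntegral_pos_of_pos_on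
    ((h.intervalIntegrable hr').sub (h.intervalIntegrable hr)) (fun ζ hζ => ?_) h.length_pos
  have hpos : 0 < (ζ - z') ^ 2 + r' ^ 2 := by
    obtain ⟨h1, h2⟩ := hζ
    rcases hr' with hr' | hr' | hr'
    · positivity
    · nlinarith [sq_nonneg r']
    · nlinarith [sq_nonneg r']
  rw [sub_pos]
  exact div_lt_div_of_pos_left (h.pos ζ ⟨hζ.1, hζ.2.le⟩) (Real.sqrt_pos.2 hpos)
    (Real.sqrt_lt_sqrt hpos.le (hlt ζ hζ))

theorem nonneg (h : IsCriticalRod L ρ) {ζ : ℝ} (hζ : ζ ∈ Icc 0 L) : 0 ≤ ρ ζ := by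
  have hcl : ζ ∈ closure (Ioc 0 L) := by
    rwa [closure_Ioc h.length_pos.ne]
  exact closure_minimal (t := Ici 0) (s := ρ '' Ioc 0 L)
    (by rintro _ ⟨x, hx, rfl⟩; exact (h.pos x hx).le) isClosed_Ici
    ((h.continuousOn ζ hζ |>.mono Ioc_subset_Icc_self).mem_closure_image hcl)

/-- The potential blows up at every point of the rod other than the origin. -/
theorem exists_forall_lt_rodV (h : IsCriticalRod L ρ) {z₀ : ℝ} (hz₀ : z₀ ∈ Ioc 0 L) (M : ℝ) :
    ∃ δ > 0, ∀ r z, |r| ≤ δ → |z - z₀| ≤ δ → (0 < r ∨ z ≤ 0 ∨ L < z) → M < rodV L ρ r z := by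
  obtain ⟨hz0, hzL⟩ := hz₀
  have hsub : Icc (z₀ / 2) z₀ ⊆ Icc 0 L := Icc_subset_Icc (by linarith) hzL
  obtain ⟨x, hx, hxmin⟩ := isCompact_Icc.exists_isMinOn (nonempty_Icc.2 (by linarith : z₀ / 2 ≤ z₀))
    (h.continuousOn.mono hsub)
  set m := ρ x
  have hm : 0 < m := h.pos x ⟨by linarith [hx.1], hx.2.trans hzL⟩
  set δ := z₀ / 4 * Real.exp (-((|M| + 1) / m))
  have hδ : 0 < δ := by positivity
  refine ⟨δ, hδ, fun r z hr hz hrz => ?_⟩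
  have hI := h.intervalIntegrable hrz
  have hcont : ContinuousOn (fun ζ => m * (z₀ + 2 * δ - ζ)⁻¹) (Icc (z₀ / 2) z₀) := by
    refine continuousOn_const.mul (ContinuousOn.inv₀ (by fun_prop) fun ζ hζ => ?_)
    have := hζ.2
    linarith
  have h_int : IntervalIntegrable (fun ζ => m * (z₀ + 2 * δ - ζ)⁻¹) volume (z₀ / 2) z₀ := by
    apply ContinuousOn.intervalIntegrable
    rwa [uIcc_of_le (by linarith)]
  calc M < |M| + 1 := (le_abs_self M).trans_lt (lt_add_one _)
    _ = m * Real.log (z₀ / 4 / δ) := by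
      rw [show z₀ / 4 / δ = Real.exp ((|M| + 1) / m) by
        simp only [δ, Real.exp_neg]
        field_simp, Real.log_exp]
      field_simp
    _ ≤ m * Real.log ((z₀ / 2 + 2 * δ) / (2 * δ)) := by
      refine mul_le_mul_of_nonneg_left (Real.log_le_log (by positivity) ?_) hm.le
      rw [div_le_div_iff₀ hδ (by positivity)]
      nlinarith
    _ = ∫ ζ in (z₀ / 2)..z₀, m * (z₀ + 2 * δ - ζ)⁻¹ := by
      rw [intervalIntegral.integral_const_mul,
        integral_comp_sub_left (fun t => t⁻¹) (z₀ + 2 * δ), integral_inv_of_pos (by linarith)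
        (by linarith)]
      congr 3 <;> ring
    _ ≤ ∫ ζ in (z₀ / 2)..z₀, ρ ζ / Real.sqrt ((ζ - z) ^ 2 + r ^ 2) := by
      refine integral_mono_on_of_le_Ioo (by linarith) h_int
        (hI.mono_set (by rwa [uIcc_of_le (by linarith), uIcc_of_le h.length_pos.le]))
        fun ζ hζ => ?_
      have hρ : m ≤ ρ ζ := hxmin (Ioo_subset_Icc_self hζ)
      rw [← div_eq_mul_inv]
      have hQ : 0 < (ζ - z) ^ 2 + r ^ 2 := by
        by_contra hcon
        have h1 : ζ - z = 0 := by nlinarith [sq_nonneg (ζ - z), sq_nonneg r]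
        have h2 : r = 0 := by nlinarith [sq_nonneg (ζ - z), sq_nonneg r]
        rcases hrz with hrz | hrz | hrz <;> linarith [hζ.1, hζ.2]
      refine div_le_div₀ (hm.le.trans hρ) hρ (Real.sqrt_pos.2 hQ) (Real.sqrt_le_iff.2 ⟨?_, ?_⟩)
      · linarith [hζ.2]
      · rw [abs_le] at hr hz
        have hz' : (ζ - z) ^ 2 ≤ (z₀ - ζ + δ) ^ 2 :=
          sq_le_sq' (by linarith [hζ.2]) (by linarith [hζ.2])
        have hr' : r ^ 2 ≤ δ ^ 2 := sq_le_sq' hr.1 hr.2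
        nlinarith [mul_pos hδ (sub_pos.2 hζ.2)]
    _ ≤ rodV L ρ r z := by
      refine integral_mono_interval (by linarith) (by linarith) hzL ?_ hI
      refine (ae_restrict_iff' measurableSet_Ioc).2 (ae_of_all _ fun ζ hζ => ?_)
      exact div_nonneg (h.nonneg (Ioc_subset_Icc_self hζ)) (Real.sqrt_nonneg _)

/-- The potential is small far away from the rod. -/
theorem exists_forall_rodV_lt (h : IsCriticalRod L ρ) {c : ℝ} (hc : 0 < c) :
    ∃ R > 0, ∀ r z, (∀ ζ ∈ Icc 0 L, R ^ 2 ≤ (ζ - z) ^ 2 + r ^ 2) → rodV L ρ r z < c := by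
  obtain ⟨C, hC⟩ := isCompact_Icc.exists_bound_of_continuousOn h.continuousOn
  have hC0 : 0 ≤ C := (norm_nonneg _).trans (hC 0 ⟨le_rfl, h.length_pos.le⟩)
  have hL := h.length_pos
  refine ⟨(C * L + 1) / c, by positivity, fun r z hR => ?_⟩
  set R := (C * L + 1) / c with hRdef
  have hR0 : 0 < R := by positivity
  have hb : ‖rodV L ρ r z‖ ≤ C / R * |L - 0| := by
    refine intervalIntegral.norm_integral_le_of_norm_le_const fun ζ hζ => ?_
    rw [uIoc_of_le hL.le] at hζ
    have hζ' := Ioc_subset_Icc_self hζ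
    rw [norm_div, Real.norm_of_nonneg (Real.sqrt_nonneg _)]
    exact div_le_div₀ hC0 (hC ζ hζ') hR0 (Real.le_sqrt_of_sq_le (hR ζ hζ'))
  rw [sub_zero, abs_of_pos hL] at hb
  refine (le_abs_self _).trans_lt (hb.trans_lt ?_)
  rw [div_mul_eq_mul_div, div_lt_iff₀ hR0, hRdef, mul_div_cancel₀ _ hc.ne']
  linarith

/-- The potential tends to its value at the origin along families of points that stay in a region
of the form `(ζ - z) ^ 2 + r ^ 2 ≥ (k ζ) ^ 2`. -/
theorem tendsto_rodV_zero (h : IsCriticalRod L ρ) {l : Filter ℝ} [l.IsCountablyGenerated]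
    {u v : ℝ → ℝ} (hu : Tendsto u l (𝓝 0)) (hv : Tendsto v l (𝓝 0)) {k : ℝ} (hk : 0 < k)
    (hbd : ∀ᶠ t in l, ∀ ζ ∈ Ioc 0 L, (k * ζ) ^ 2 ≤ (ζ - v t) ^ 2 + u t ^ 2) :
    Tendsto (fun t => rodV L ρ (u t) (v t)) l (𝓝 (rodV L ρ 0 0)) := by
  have hL := h.length_pos
  refine intervalIntegral.tendsto_integral_filter_of_dominated_convergence
    (fun ζ => k⁻¹ * (ρ ζ / ζ)) ?_ ?_ (h.integrable_div.const_mul _) ?_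
  · refine Eventually.of_forall fun t => ?_
    rw [uIoc_of_le hL.le]
    refine AEMeasurable.aestronglyMeasurable (AEMeasurable.div ?_ ?_)
    · exact (h.continuousOn.mono Ioc_subset_Icc_self).aemeasurable measurableSet_Ioc
    · exact Measurable.aemeasurable (by fun_prop)
  · filter_upwards [hbd] with t ht
    refine ae_of_all _ fun ζ hζ => ?_
    rw [uIoc_of_le hL.le] at hζ
    have hζ0 := hζ.1
    have hρ := (h.pos ζ hζ).le
    rw [Real.norm_of_nonneg (by positivity)]
    calc ρ ζ / Real.sqrt ((ζ - v t) ^ 2 + u t ^ 2) ≤ ρ ζ / (k * ζ) :=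
          div_le_div_of_nonneg_left hρ (by positivity) (Real.le_sqrt_of_sq_le (ht ζ hζ))
      _ = k⁻¹ * (ρ ζ / ζ) := by field_simp
  · refine ae_of_all _ fun ζ hζ => ?_
    rw [uIoc_of_le hL.le] at hζ
    have hζ0 := hζ.1
    refine Tendsto.div tendsto_const_nhds (Tendsto.sqrt ?_)
      (Real.sqrt_pos.2 (by simp; positivity)).ne'
    exact ((tendsto_const_nhds.sub hv).pow 2).add (hu.pow 2)

theorem contDiffAt_rodV (h : IsCriticalRod L ρ) {r z : ℝ} (hrz : 0 < r ∨ z < 0 ∨ L < z) :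
    ContDiffAt ℝ ⊤ (fun p : ℝ × ℝ => rodV L ρ p.2 p.1) (z, r) :=
  (rodV_contDiffAt_fderiv h.length_pos h.continuousOn h.pos fun _ => rodDistSq_pos hrz).1

theorem continuousAt_rodV_left (h : IsCriticalRod L ρ) {r z : ℝ} (hrz : 0 < r ∨ z < 0 ∨ L < z) :
    ContinuousAt (fun t => rodV L ρ t z) r :=
  ContinuousAt.comp (f := fun t => (z, t)) (h.contDiffAt_rodV hrz).continuousAt (by fun_prop)

theorem continuousAt_rodV_right (h : IsCriticalRod L ρ) {r z : ℝ} (hrz : 0 < r ∨ z < 0 ∨ L < z) :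
    ContinuousAt (fun t => rodV L ρ r t) z :=
  ContinuousAt.comp (f := fun t => (t, r)) (h.contDiffAt_rodV hrz).continuousAt (by fun_prop)

theorem rodV_lt_of_lt (h : IsCriticalRod L ρ) {r r' z : ℝ} (hr0 : 0 ≤ r)
    (hr : 0 < r ∨ z ≤ 0 ∨ L < z) (hrr' : r < r') : rodV L ρ r' z < rodV L ρ r z :=
  h.rodV_lt (Or.inl (hr0.trans_lt hrr')) hr fun ζ _ => by nlinarith

theorem exists_pos_lt_rodV (h : IsCriticalRod L ρ) {c z : ℝ} (hz : z ≤ 0 ∨ L < z)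
    (hc : c < rodV L ρ 0 z) : ∃ b > 0, c < rodV L ρ b z := by
  have ht : Tendsto (fun t => rodV L ρ t z) (𝓝[>] 0) (𝓝 (rodV L ρ 0 z)) := by
    by_cases hz0 : z = 0
    · subst hz0
      refine h.tendsto_rodV_zero (tendsto_id.mono_left nhdsWithin_le_nhds)
        tendsto_const_nhds one_pos (Eventually.of_forall fun t ζ _ => ?_)
      nlinarith [sq_nonneg t]
    · refine (h.continuousAt_rodV_left (Or.inr ?_)).tendsto.mono_left nhdsWithin_le_nhds
      exact hz.imp_left fun hz => lt_of_le_of_ne hz hz0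
  obtain ⟨b, hb, hb0⟩ := ((ht.eventually (lt_mem_nhds hc)).and self_mem_nhdsWithin).exists
  exact ⟨b, hb0, hb⟩

theorem exists_rodV_eq (h : IsCriticalRod L ρ) {c : ℝ} (hc : 0 < c) {a z : ℝ} (ha : 0 < a)
    (hca : c < rodV L ρ a z) : ∃ r > a, rodV L ρ r z = c := by
  obtain ⟨R, hR, hRc⟩ := h.exists_forall_rodV_lt hc
  have hb : rodV L ρ (a + R) z < c := hRc _ _ fun ζ _ => by nlinarith [sq_nonneg (ζ - z)]
  obtain ⟨r, hr, hrc⟩ := intermediate_value_Ioo' (by linarith : a ≤ a + R)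
    (fun t ht => (h.continuousAt_rodV_left (z := z)
      (Or.inl (ha.trans_le ht.1))).continuousWithinAt) ⟨hb, hca⟩
  exact ⟨r, hr.1, hrc⟩

end IsCriticalRod

open Classical in
/-- The positive radius at which the rod potential takes the value `c` at height `z`, or `0` if
there is none. -/
noncomputable def rodContourRadius (L : ℝ) (ρ : ℝ → ℝ) (c z : ℝ) : ℝ :=
  if h : ∃ r, 0 < r ∧ rodV L ρ r z = c then h.choose else 0

theorem rodContourRadius_nonneg (L : ℝ) (ρ : ℝ → ℝ) (c z : ℝ) : 0 ≤ rodContourRadius L ρ c z := by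
  unfold rodContourRadius
  split_ifs with h
  exacts [h.choose_spec.1.le, le_rfl]

theorem rodV_rodContourRadius {L : ℝ} {ρ : ℝ → ℝ} {c z : ℝ} (h : 0 < rodContourRadius L ρ c z) :
    rodV L ρ (rodContourRadius L ρ c z) z = c := by
  unfold rodContourRadius at h ⊢
  split_ifs at h ⊢ with h'
  exacts [h'.choose_spec.2, absurd h (lt_irrefl _)]

namespace IsCriticalRod

variable {L : ℝ} {ρ : ℝ → ℝ} {c : ℝ}

theorem rodContourRadius_eq (h : IsCriticalRod L ρ) {r z : ℝ} (hr : 0 < r)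
    (hrc : rodV L ρ r z = c) : rodContourRadius L ρ c z = r := by
  have hex : ∃ r, 0 < r ∧ rodV L ρ r z = c := ⟨r, hr, hrc⟩
  rw [rodContourRadius, dif_pos hex]
  obtain ⟨h1, h2⟩ := hex.choose_spec
  rcases lt_trichotomy hex.choose r with hlt | heq | hgt
  · have := h.rodV_lt_of_lt (z := z) h1.le (Or.inl h1) hlt
    linarith
  · exact heq
  · have := h.rodV_lt_of_lt (z := z) hr.le (Or.inl hr) hgt
    linarith

theorem lt_rodContourRadius_iff (h : IsCriticalRod L ρ) (hc : 0 < c) {a z : ℝ} (ha : 0 < a) :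
    a < rodContourRadius L ρ c z ↔ c < rodV L ρ a z := by
  refine ⟨fun hlt => ?_, fun hlt => ?_⟩
  · have := h.rodV_lt_of_lt (z := z) ha.le (Or.inl ha) hlt
    rwa [rodV_rodContourRadius (ha.trans hlt)] at this
  · obtain ⟨r, hr, hrc⟩ := h.exists_rodV_eq hc ha hlt
    rwa [h.rodContourRadius_eq (ha.trans hr) hrc]

theorem rodContourRadius_lt_iff (h : IsCriticalRod L ρ) (hc : 0 < c) {a z : ℝ} (ha : 0 < a) :
    rodContourRadius L ρ c z < a ↔ rodV L ρ a z < c := by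
  rw [← not_iff_not, not_lt, not_lt, le_iff_lt_or_eq, le_iff_lt_or_eq,
    h.lt_rodContourRadius_iff hc ha]
  refine or_congr_right ⟨fun heq => ?_, fun heq => (h.rodContourRadius_eq ha heq.symm).symm⟩
  have hp : 0 < rodContourRadius L ρ c z := heq ▸ ha
  have := rodV_rodContourRadius hp
  rw [← heq] at this
  exact this.symm

theorem continuous_rodContourRadius (h : IsCriticalRod L ρ) (hc : 0 < c) :
    Continuous (rodContourRadius L ρ c) := by
  refine continuous_iff_continuousAt.2 fun z => tendsto_order.2 ⟨fun b hb => ?_, fun a ha => ?_⟩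
  · rcases lt_or_ge b 0 with hb0 | hb0
    · exact Eventually.of_forall fun t => hb0.trans_le (rodContourRadius_nonneg L ρ c t)
    · obtain ⟨b', hbb', hb'⟩ := exists_between hb
      have hb'0 := hb0.trans_lt hbb'
      filter_upwards [(h.continuousAt_rodV_right (Or.inl hb'0)).eventually
        (lt_mem_nhds ((h.lt_rodContourRadius_iff hc hb'0).1 hb'))] with t ht
      exact hbb'.trans ((h.lt_rodContourRadius_iff hc hb'0).2 ht)
  · have ha0 := (rodContourRadius_nonneg L ρ c z).trans_lt ha
    filter_upwards [(h.continuousAt_rodV_right (Or.inl ha0)).eventually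
      (gt_mem_nhds ((h.rodContourRadius_lt_iff hc ha0).1 ha))] with t ht
    exact (h.rodContourRadius_lt_iff hc ha0).2 ht

theorem analyticAt_rodContourRadius (h : IsCriticalRod L ρ) {z : ℝ}
    (hz : 0 < rodContourRadius L ρ c z) : AnalyticAt ℝ (rodContourRadius L ρ c) z := by
  set r := rodContourRadius L ρ c z with hr
  have hrc : rodV L ρ r z = c := rodV_rodContourRadius hz
  obtain ⟨hV, hV'⟩ := rodV_contDiffAt_fderiv h.length_pos h.continuousOn h.pos (z := z) (r := r)
    fun _ => rodDistSq_pos (Or.inl hz)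
  have hinv : (fderiv ℝ (fun p : ℝ × ℝ => rodV L ρ p.2 p.1) (z, r) ∘L
      .inr ℝ ℝ ℝ).IsInvertible := by
    set d := fderiv ℝ (fun p : ℝ × ℝ => rodV L ρ p.2 p.1) (z, r) (0, 1)
    have hd : d ≠ 0 := (hV' hz).ne
    have heq : (fderiv ℝ (fun p : ℝ × ℝ => rodV L ρ p.2 p.1) (z, r) ∘L .inr ℝ ℝ ℝ) =
        d • ContinuousLinearMap.id ℝ ℝ := by
      ext
      simp [d]
    rw [heq]
    refine ContinuousLinearMap.IsInvertible.of_inverse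
      (g := d⁻¹ • ContinuousLinearMap.id ℝ ℝ) ?_ ?_ <;>
    · ext
      simp [hd]
  have hg := hV.contDiffAt_implicitFunction (by simp) hinv
  have hg0 : hV.implicitFunction (by simp) hinv z = r :=
    hV.implicitFunction_apply_self (by simp) hinv
  refine AnalyticAt.congr (f := hV.implicitFunction (by simp) hinv) hg.analyticAt ?_
  filter_upwards [hV.eventually_apply_implicitFunction (by simp) hinv,
    hg.continuousAt.eventually (lt_mem_nhds (by rw [hg0]; exact hz))] with t ht ht0
  exact (h.rodContourRadius_eq ht0 (ht.trans hrc)).symm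

/-- The upper end of the contour line. -/
theorem exists_upper_endpoint (h : IsCriticalRod L ρ) (hc : 0 < c) :
    ∃ z₂ > L, rodV L ρ 0 z₂ = c ∧
      (∀ r z, 0 ≤ r → z₂ ≤ z → (r, z) ≠ (0, z₂) → rodV L ρ r z < c) ∧
      ∀ z ∈ Ioo L z₂, ∃ b > 0, c < rodV L ρ b z := by
  have hL := h.length_pos
  obtain ⟨δ, hδ, hδc⟩ := h.exists_forall_lt_rodV (right_mem_Ioc.2 hL) c
  obtain ⟨R, hR, hRc⟩ := h.exists_forall_rodV_lt hc
  have h1 : c < rodV L ρ 0 (L + δ) := hδc _ _ (by simpa using hδ.le) (by simp [abs_of_pos hδ])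
    (Or.inr (Or.inr (by linarith)))
  have h2 : rodV L ρ 0 (L + δ + R) < c := hRc _ _ fun ζ hζ => by nlinarith [hζ.2]
  obtain ⟨z₂, hz₂, hz₂c⟩ := intermediate_value_Ioo' (by linarith : L + δ ≤ L + δ + R)
    (fun t ht => (h.continuousAt_rodV_right (r := 0)
      (Or.inr (Or.inr (by linarith [ht.1])))).continuousWithinAt) ⟨h2, h1⟩
  have hLz₂ : L < z₂ := by linarith [hz₂.1]
  refine ⟨z₂, hLz₂, hz₂c, fun r z hr hz hne => ?_, fun z hz => ?_⟩
  · rw [← hz₂c]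
    refine h.rodV_lt (Or.inr (Or.inr (hLz₂.trans_le hz))) (Or.inr (Or.inr hLz₂)) fun ζ hζ => ?_
    rcases hz.lt_or_eq with hlt | heq
    · nlinarith [hζ.2, sq_nonneg r]
    · have hr0 : r ≠ 0 := fun hr0 => hne (by rw [hr0, heq])
      subst heq
      have : 0 < r ^ 2 := by positivity
      linarith
  · refine h.exists_pos_lt_rodV (Or.inr hz.1) ?_
    rw [← hz₂c]
    exact h.rodV_lt (Or.inr (Or.inr hLz₂)) (Or.inr (Or.inr hz.1)) fun ζ hζ => by
      nlinarith [hζ.2, hz.1, hz.2]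

/-- The lower end of the contour line. -/
theorem exists_lower_endpoint (h : IsCriticalRod L ρ) (hc : 0 < c) :
    ∃ z₁ ≤ 0, (c < rodV L ρ 0 0 → z₁ < 0 ∧ rodV L ρ 0 z₁ = c) ∧ (rodV L ρ 0 0 ≤ c → z₁ = 0) ∧
      (∀ r z, 0 ≤ r → z ≤ z₁ → (r, z) ≠ (0, z₁) → rodV L ρ r z < c) ∧
      ∀ z ∈ Ioc z₁ 0, ∃ b > 0, c < rodV L ρ b z := by
  have hL := h.length_pos
  have key : ∀ z₁ ≤ 0, rodV L ρ 0 z₁ ≤ c →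
      ∀ r z, 0 ≤ r → z ≤ z₁ → (r, z) ≠ (0, z₁) → rodV L ρ r z < c := by
    intro z₁ hz₁ hz₁c r z hr hz hne
    refine lt_of_lt_of_le ?_ hz₁c
    refine h.rodV_lt (Or.inr (Or.inl (hz.trans hz₁))) (Or.inr (Or.inl hz₁)) fun ζ hζ => ?_
    rcases hz.lt_or_eq with hlt | heq
    · nlinarith [hζ.1, sq_nonneg r]
    · have hr0 : r ≠ 0 := fun hr0 => hne (by rw [hr0, heq])
      subst heq
      have : 0 < r ^ 2 := by positivity
      linarith
  rcases le_or_gt (rodV L ρ 0 0) c with h0 | h0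
  · exact ⟨0, le_rfl, fun h' => absurd h' h0.not_gt, fun _ => rfl, key 0 le_rfl h0,
      fun z hz => absurd (hz.1.trans_le hz.2) (lt_irrefl _)⟩
  obtain ⟨R, hR, hRc⟩ := h.exists_forall_rodV_lt hc
  have ht : Tendsto (fun t => rodV L ρ 0 t) (𝓝[<] 0) (𝓝 (rodV L ρ 0 0)) := by
    refine h.tendsto_rodV_zero tendsto_const_nhds (tendsto_id.mono_left nhdsWithin_le_nhds)
      one_pos ?_
    filter_upwards [self_mem_nhdsWithin] with t ht ζ hζ
    have ht' : t < 0 := ht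
    nlinarith [hζ.1]
  obtain ⟨b, hb, hb0⟩ := ((ht.eventually (lt_mem_nhds h0)).and self_mem_nhdsWithin).exists
  have hb0 : b < 0 := hb0
  have h2 : rodV L ρ 0 (b - R) < c := hRc _ _ fun ζ hζ => by nlinarith [hζ.1]
  obtain ⟨z₁, hz₁, hz₁c⟩ := intermediate_value_Ioo (by linarith : b - R ≤ b)
    (fun t ht => (h.continuousAt_rodV_right (r := 0)
      (Or.inr (Or.inl (ht.2.trans_lt hb0)))).continuousWithinAt) ⟨h2, hb⟩
  have hz₁0 : z₁ < 0 := hz₁.2.trans hb0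
  refine ⟨z₁, hz₁0.le, fun _ => ⟨hz₁0, hz₁c⟩, fun h' => absurd h0 h'.not_gt,
    key z₁ hz₁0.le hz₁c.le, fun z hz => h.exists_pos_lt_rodV (Or.inl hz.2) ?_⟩
  rw [← hz₁c]
  exact h.rodV_lt (Or.inr (Or.inl hz₁0.le)) (Or.inr (Or.inl hz.2)) fun ζ hζ => by
    nlinarith [hζ.1, hz.1, hz.2]

theorem tendsto_rodContourRadius_div (h : IsCriticalRod L ρ) (hc : 0 < c)
    (hc0 : rodV L ρ 0 0 < c) :
    Tendsto (fun z => rodContourRadius L ρ c z / z) (𝓝[>] 0) (𝓝 0) := by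
  refine tendsto_order.2 ⟨fun b hb => ?_, fun ε hε => ?_⟩
  · filter_upwards [self_mem_nhdsWithin] with t ht
    exact hb.trans_le (div_nonneg (rodContourRadius_nonneg L ρ c t) (le_of_lt ht))
  · have hid : Tendsto (fun t : ℝ => t) (𝓝[>] 0) (𝓝 0) := tendsto_id.mono_left nhdsWithin_le_nhds
    have hu : Tendsto (fun t : ℝ => ε * t) (𝓝[>] 0) (𝓝 0) := by simpa using hid.const_mul ε
    have ht := h.tendsto_rodV_zero hu hid (k := ε / Real.sqrt (1 + ε ^ 2)) (by positivity)
      (Eventually.of_forall fun t ζ _ => by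
        rw [mul_pow, div_pow, Real.sq_sqrt (by positivity), div_mul_eq_mul_div,
          div_le_iff₀ (by positivity)]
        nlinarith [sq_nonneg (ζ - (1 + ε ^ 2) * t)])
    filter_upwards [ht.eventually (gt_mem_nhds hc0), self_mem_nhdsWithin] with t htc ht0
    have ht0 : 0 < t := ht0
    rw [div_lt_iff₀ ht0]
    exact (h.rodContourRadius_lt_iff hc (by positivity)).2 htc

theorem continuousAt_rodV3 (h : IsCriticalRod L ρ) {x : EuclideanSpace ℝ (Fin 3)}
    (hx : x ∈ rodCompl L) : ContinuousAt (rodV3 L ρ) x := by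
  have hD : 0 < Real.sqrt (x 0 ^ 2 + x 1 ^ 2) ∨ x 2 < 0 ∨ L < x 2 := by
    by_contra! hcon
    obtain ⟨h1, h2, h3⟩ := hcon
    rw [Real.sqrt_le_iff] at h1
    refine hx ⟨?_, ?_, h2, h3⟩ <;> nlinarith [sq_nonneg (x 0), sq_nonneg (x 1)]
  exact ContinuousAt.comp (f := fun y : EuclideanSpace ℝ (Fin 3) =>
    (y 2, Real.sqrt (y 0 ^ 2 + y 1 ^ 2))) (h.contDiffAt_rodV hD).continuousAt
      (Continuous.continuousAt (by fun_prop))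

theorem closure_rodLevelSurface_subset (h : IsCriticalRod L ρ) :
    closure (rodLevelSurface L ρ c) ⊆ rodLevelSurface L ρ c ∪ {0} := by
  intro x hx
  by_cases hxD : x ∈ rodCompl L
  · left
    refine ⟨hxD, ?_⟩
    have := (h.continuousAt_rodV3 hxD).continuousWithinAt.mem_closure_image hx
    have hsub : rodV3 L ρ '' rodLevelSurface L ρ c ⊆ {c} := by
      rintro _ ⟨y, hy, rfl⟩
      exact hy.2
    exact closure_minimal hsub isClosed_singleton this
  · right
    obtain ⟨h0, h1, h2⟩ : x 0 = 0 ∧ x 1 = 0 ∧ x 2 ∈ Icc 0 L := not_not.1 hxD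
    by_contra hne
    have hx2 : x 2 ∈ Ioc 0 L := by
      refine ⟨lt_of_le_of_ne h2.1 fun h2' => hne ?_, h2.2⟩
      ext i
      fin_cases i <;> simp [h0, h1, ← h2']
    obtain ⟨δ, hδ, hδc⟩ := h.exists_forall_lt_rodV hx2 c
    have hr : ContinuousAt (fun y : EuclideanSpace ℝ (Fin 3) => Real.sqrt (y 0 ^ 2 + y 1 ^ 2)) x :=
      Continuous.continuousAt (by fun_prop)
    have hz : ContinuousAt (fun y : EuclideanSpace ℝ (Fin 3) => |y 2 - x 2|) x :=
      Continuous.continuousAt (by fun_prop)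
    have hev : ∀ᶠ y in 𝓝 x, Real.sqrt (y 0 ^ 2 + y 1 ^ 2) < δ ∧ |y 2 - x 2| < δ :=
      (hr.eventually (gt_mem_nhds (by simpa [h0, h1] using hδ))).and
        (hz.eventually (gt_mem_nhds (by simpa using hδ)))
    obtain ⟨y, hyΓ, hy1, hy2⟩ := ((mem_closure_iff_frequently.1 hx).and_eventually hev).exists
    refine (hδc _ _ (by rw [abs_of_nonneg (Real.sqrt_nonneg _)]; exact hy1.le) hy2.le ?_).ne'
      hyΓ.2
    by_contra! hcon
    obtain ⟨h1, h2, h3⟩ := hcon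
    rw [Real.sqrt_le_iff] at h1
    refine hyΓ.1 ⟨?_, ?_, h2.le, h3⟩ <;> nlinarith [sq_nonneg (y 0), sq_nonneg (y 1)]

theorem zero_mem_closure_rodLevelSurface (h : IsCriticalRod L ρ) (hc : 0 < c)
    (h0 : rodContourRadius L ρ c 0 = 0) (hpos : ∀ᶠ z in 𝓝[>] 0, 0 < rodContourRadius L ρ c z) :
    (0 : EuclideanSpace ℝ (Fin 3)) ∈ closure (rodLevelSurface L ρ c) := by
  have hcont : Continuous fun z : ℝ =>
      (WithLp.toLp 2 ![rodContourRadius L ρ c z, 0, z] : EuclideanSpace ℝ (Fin 3)) := by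
    have := h.continuous_rodContourRadius hc
    refine (PiLp.continuous_toLp 2 _).comp (continuous_pi fun i => ?_)
    fin_cases i <;> simp <;> fun_prop
  have ht := (hcont.tendsto 0).mono_left (nhdsWithin_le_nhds (s := Ioi 0))
  have hz : (WithLp.toLp 2 ![rodContourRadius L ρ c 0, 0, 0] : EuclideanSpace ℝ (Fin 3)) = 0 := by
    ext i
    fin_cases i <;> simp [h0]
  rw [hz] at ht
  refine mem_closure_of_tendsto ht ?_
  filter_upwards [hpos] with z hz
  refine ⟨fun hcon => hz.ne' (by simpa using hcon.1), ?_⟩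
  simpa [rodV3, Real.sqrt_sq hz.le] using rodV_rodContourRadius hz

end IsCriticalRod

/-- For `c ∈ (0,∞)` the contour line `L_c` is nonempty and is the
graph of a continuous nonnegative function `r_c` on a compact interval `[z₁, z₂]` with
`[0,L] ⊆ [z₁,z₂)`, analytic and strictly positive on `(z₁,z₂)` and vanishing at the
endpoints. If `c < V(0,0)` then `z₁ < 0` and `(0,z₁) ∈ L_c`; if `c > V(0,0)` then
`z₁ = 0` and the curve approaches `(0,0)` tangentially to the `z`-axis
(`r_c(z)/z → 0` as `z → 0+`), so that `closure Γ_c = Γ_c ∪ {0}`. -/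
theorem statement12
    (L : ℝ) (hL : 0 < L) (ρ : ℝ → ℝ) (hρc : ContinuousOn ρ (Icc 0 L))
    (hρ0 : ρ 0 = 0) (hρpos : ∀ ζ ∈ Ioc 0 L, 0 < ρ ζ)
    (hcrit : IntervalIntegrable (fun ζ => ρ ζ / ζ) volume 0 L)
    (c : ℝ) (hc : 0 < c) :
    (rodContour L ρ c).Nonempty ∧
    ∃ z₁ z₂ : ℝ, z₁ ≤ 0 ∧ L < z₂ ∧
      ∃ rc : ℝ → ℝ,
        ContinuousOn rc (Icc z₁ z₂) ∧ (∀ z ∈ Icc z₁ z₂, 0 ≤ rc z) ∧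
        AnalyticOn ℝ rc (Ioo z₁ z₂) ∧ (∀ z ∈ Ioo z₁ z₂, 0 < rc z) ∧
        rc z₁ = 0 ∧ rc z₂ = 0 ∧
        rodContour L ρ c ∪ {((0 : ℝ), z₁)} = (fun z => (rc z, z)) '' Icc z₁ z₂ ∧
        (c < rodV L ρ 0 0 → z₁ < 0 ∧ ((0 : ℝ), z₁) ∈ rodContour L ρ c) ∧
        (rodV L ρ 0 0 < c → z₁ = 0 ∧
          Tendsto (fun z => rc z / z) (𝓝[>] 0) (𝓝 0) ∧
          closure (rodLevelSurface L ρ c) = rodLevelSurface L ρ c ∪ {0}) := by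
  have h : IsCriticalRod L ρ := ⟨hL, hρc, hρpos, hcrit⟩
  obtain ⟨z₂, hLz₂, hz₂c, hz₂lt, hz₂gt⟩ := h.exists_upper_endpoint hc
  obtain ⟨z₁, hz₁, hz₁lt0, hz₁eq0, hz₁lt, hz₁gt⟩ := h.exists_lower_endpoint hc
  have hz₂mem : ((0 : ℝ), z₂) ∈ rodContour L ρ c := ⟨le_rfl, Or.inr (Or.inr hLz₂), hz₂c⟩
  have hgt : ∀ z ∈ Ioo z₁ z₂, ∃ b > 0, c < rodV L ρ b z := by
    intro z hz
    rcases le_or_gt z 0 with h0 | h0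
    · exact hz₁gt z ⟨hz.1, h0⟩
    rcases le_or_gt z L with h1 | h1
    · obtain ⟨δ, hδ, hδc⟩ := h.exists_forall_lt_rodV ⟨h0, h1⟩ c
      exact ⟨δ, hδ, hδc _ _ (abs_of_pos hδ).le (by simpa using hδ.le) (Or.inl hδ)⟩
    · exact hz₂gt z ⟨h1, hz.2⟩
  have hpos : ∀ z ∈ Ioo z₁ z₂, 0 < rodContourRadius L ρ c z := fun z hz => by
    obtain ⟨b, hb, hbc⟩ := hgt z hz
    exact hb.trans ((h.lt_rodContourRadius_iff hc hb).2 hbc)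
  have hzero₁ : rodContourRadius L ρ c z₁ = 0 := by
    by_contra hne
    have hp := lt_of_le_of_ne (rodContourRadius_nonneg L ρ c z₁) (Ne.symm hne)
    exact (hz₁lt _ _ hp.le le_rfl (by simp [hne])).ne (rodV_rodContourRadius hp)
  have hzero₂ : rodContourRadius L ρ c z₂ = 0 := by
    by_contra hne
    have hp := lt_of_le_of_ne (rodContourRadius_nonneg L ρ c z₂) (Ne.symm hne)
    exact (hz₂lt _ _ hp.le le_rfl (by simp [hne])).ne (rodV_rodContourRadius hp)
  refine ⟨⟨_, hz₂mem⟩, z₁, z₂, hz₁, hLz₂, rodContourRadius L ρ c,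
    (h.continuous_rodContourRadius hc).continuousOn,
    fun z _ => rodContourRadius_nonneg L ρ c z,
    fun z hz => (h.analyticAt_rodContourRadius (hpos z hz)).analyticWithinAt,
    hpos, hzero₁, hzero₂, ?_, fun hc0 => ?_, fun hc0 => ?_⟩
  · ext ⟨r, z⟩
    constructor
    · rintro (⟨hr, hD, hrc⟩ | hrz)
      · dsimp only at hr hD hrc
        rcases le_or_gt z z₁ with hz | hz
        · by_cases hne : (r, z) = (0, z₁)
          · exact ⟨z₁, ⟨le_rfl, by linarith⟩, by simp [hne, hzero₁]⟩
          · exact absurd hrc (hz₁lt r z hr hz hne).ne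
        rcases le_or_gt z₂ z with hz' | hz'
        · by_cases hne : (r, z) = (0, z₂)
          · exact ⟨z₂, ⟨by linarith, le_rfl⟩, by simp [hne, hzero₂]⟩
          · exact absurd hrc (hz₂lt r z hr hz' hne).ne
        refine ⟨z, ⟨hz.le, hz'.le⟩, ?_⟩
        rcases hr.lt_or_eq with hr0 | rfl
        · simp [h.rodContourRadius_eq hr0 hrc]
        · obtain ⟨b, hb, hbc⟩ := hgt z ⟨hz, hz'⟩
          have := h.rodV_lt_of_lt le_rfl (hD.imp_right (Or.imp_left le_of_lt)) hb
          linarith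
      · rw [mem_singleton_iff] at hrz
        exact ⟨z₁, ⟨le_rfl, by linarith⟩, by simp [hrz, hzero₁]⟩
    · rintro ⟨t, ht, hteq⟩
      rw [← hteq]
      rcases ht.1.lt_or_eq with ht1 | rfl
      · rcases ht.2.lt_or_eq with ht2 | rfl
        · have hp := hpos t ⟨ht1, ht2⟩
          exact Or.inl ⟨hp.le, Or.inl hp, rodV_rodContourRadius hp⟩
        · simp only [hzero₂]
          exact Or.inl hz₂mem
      · simp [hzero₁]
  · obtain ⟨h1, h2⟩ := hz₁lt0 hc0
    exact ⟨h1, le_rfl, Or.inr (Or.inl h1), h2⟩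
  · obtain rfl := hz₁eq0 hc0.le
    refine ⟨rfl, h.tendsto_rodContourRadius_div hc hc0,
      h.closure_rodLevelSurface_subset.antisymm (union_subset subset_closure ?_)⟩
    rw [singleton_subset_iff]
    refine h.zero_mem_closure_rodLevelSurface hc hzero₁ ?_
    filter_upwards [Ioo_mem_nhdsGT (hL.trans hLz₂)] with z hz using hpos z hz
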